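/- arXiv:2302.13459 — 2 statements merged into one kernel-verified Lean document; each statement's English description precedes it below -/
import Mathlib

section
/- Let J = E4^3/(E4^3 - E6^2) be the normalized elliptic modular function on the upper half-plane (so J(i) = 1). Then the complex derivative of J vanishes at τ = i, the second derivative J''(i) is nonzero, and J'''(i) = 3i · J''(i). -/
open Complex Filter Topology

noncomputable section

/-- The nome `q = e^{2πiτ}`. -/
def qq (τ : ℂ) : ℂ := Complex.exp (2 * Real.pi * Complex.I * τ)

/-- The Eisenstein series `E₄(τ) = 1 + 240 Σ_{n≥1} σ₃(n) qⁿ`. -/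
def E4 (τ : ℂ) : ℂ := 1 + 240 * ∑' n : ℕ, (∑ d ∈ (n + 1).divisors, (d : ℂ) ^ 3) * qq τ ^ (n + 1)

/-- The Eisenstein series `E₆(τ) = 1 − 504 Σ_{n≥1} σ₅(n) qⁿ`. -/
def E6 (τ : ℂ) : ℂ := 1 - 504 * ∑' n : ℕ, (∑ d ∈ (n + 1).divisors, (d : ℂ) ^ 5) * qq τ ^ (n + 1)

/-- The normalized elliptic modular function `J = E₄³ / (E₄³ − E₆²)`. -/
def J (τ : ℂ) : ℂ := E4 τ ^ 3 / (E4 τ ^ 3 - E6 τ ^ 2)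

/-- The Dedekind eta function `η(τ) = e^{πiτ/12} ∏_{n≥1} (1 − qⁿ)`. -/
def dedekindEta (τ : ℂ) : ℂ := Complex.exp (Real.pi * Complex.I * τ / 12) * ∏' n : ℕ, (1 - qq τ ^ (n + 1))

/-- The elliptic point `ρ = e^{2πi/3}`. -/
def rho : ℂ := Complex.exp (2 * Real.pi * Complex.I / 3)

/-!
Since `J` is invariant under `s τ = -1/τ`, which fixes `i` with `s'(i) = -1` and `s''(i) = -2i`,
differentiating `J ∘ s = J` once gives `J'(i) = 0`, and differentiating it three times gives
`2 J'''(i) = -3 s''(i) J''(i)`. For `J''(i) ≠ 0`, write `J - 1 = E6² / (E4³ - E6²)`: the denominator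
is `1728 Δ ≠ 0`, weight-six modularity forces `E6(i) = 0`, and this zero is simple because the
`q`-series `∑ σ₅(n) qⁿ` has termwise positive `q`-derivative at positive `q`.
-/

section Involution

variable {𝕜 F : Type*} [NontriviallyNormedField 𝕜] [NeZero (2 : 𝕜)]
  [NormedAddCommGroup F] [NormedSpace 𝕜 F] {f : 𝕜 → F} {s : 𝕜 → 𝕜} {p : 𝕜}

lemma deriv_eq_zero_of_comp_eventuallyEq (hf : DifferentiableAt 𝕜 f p)
    (hs : HasDerivAt s (-1) p) (hp : s p = p) (h : f ∘ s =ᶠ[𝓝 p] f) : deriv f p = 0 := by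
  have hcomp : HasDerivAt (f ∘ s) ((-1 : 𝕜) • deriv f p) p :=
    HasDerivAt.scomp p (hp.symm ▸ hf.hasDerivAt) hs
  have hneg : (-1 : 𝕜) • deriv f p = deriv f p := by rw [← hcomp.deriv, h.deriv_eq]
  have htwo : (2 : 𝕜) • deriv f p = 0 := by linear_combination (norm := module) -hneg
  exact (smul_eq_zero_iff_right two_ne_zero).mp htwo

lemma two_smul_iteratedDeriv_three_of_comp_eventuallyEq (hf : ContDiffAt 𝕜 3 f p)
    (hs : ContDiffAt 𝕜 3 s p) (hs' : deriv s p = -1) (hp : s p = p) (h : f ∘ s =ᶠ[𝓝 p] f) :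
    (2 : 𝕜) • iteratedDeriv 3 f p = -(3 * iteratedDeriv 2 s p) • iteratedDeriv 2 f p := by
  have hdf : deriv f p = 0 := by
    refine deriv_eq_zero_of_comp_eventuallyEq (hf.differentiableAt (by norm_num)) ?_ hp h
    exact hs' ▸ (hs.differentiableAt (by norm_num)).hasDerivAt
  have hcomp := iteratedDeriv_scomp_three (hp.symm ▸ hf) hs
  rw [h.iteratedDeriv_eq, hp, hs', hdf] at hcomp
  linear_combination (norm := module) hcomp

end Involution

lemma iteratedDeriv_two_sq_mul {𝕜 : Type*} [NontriviallyNormedField 𝕜] {e g : 𝕜 → 𝕜} {z : 𝕜}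
    (he : ContDiffAt 𝕜 2 e z) (hg : ContDiffAt 𝕜 2 g z) (h0 : e z = 0) :
    iteratedDeriv 2 (fun τ ↦ e τ ^ 2 * g τ) z = 2 * deriv e z ^ 2 * g z := by
  have hsq : iteratedDeriv 2 (fun τ ↦ e τ * e τ) z = 2 * deriv e z ^ 2 := by
    rw [iteratedDeriv_fun_mul he he]
    simp [Finset.sum_range_succ, h0, sq, mul_assoc]
  have hderiv : deriv (fun τ ↦ e τ * e τ) z = 0 := by
    have he' := he.differentiableAt two_ne_zero
    simp [deriv_fun_mul he' he', h0]
  simp only [sq (e _)]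
  rw [iteratedDeriv_fun_mul (he.mul he) hg]
  simp [Finset.sum_range_succ, hsq, hderiv, h0]

lemma hasDerivAt_neg_inv_I : HasDerivAt (fun τ : ℂ ↦ -τ⁻¹) (-1) I := by
  simpa using (hasDerivAt_inv I_ne_zero).fun_neg

lemma iteratedDeriv_two_neg_inv_I : iteratedDeriv 2 (fun τ : ℂ ↦ -τ⁻¹) I = -(2 * I) := by
  rw [iteratedDeriv_fun_neg, iteratedDeriv_eq_iterate, iter_deriv_inv]
  norm_num

section QSeries

/-- The `q`-series `∑ aₙ qⁿ` with coefficients `a`, as a function of `τ`; the Eisenstein series are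
affine functions of the `q`-series with divisor-sum coefficients. -/
def qSeries (a : ℕ → ℂ) (τ : ℂ) : ℂ := ∑' n : ℕ, a n * qq τ ^ n

lemma norm_qq (τ : ℂ) : ‖qq τ‖ = Real.exp (-(2 * Real.pi * τ.im)) := by
  simp [qq, Complex.norm_exp]

lemma hasDerivAt_qq_pow (n : ℕ) (τ : ℂ) :
    HasDerivAt (fun τ ↦ qq τ ^ n) (2 * Real.pi * I * n * qq τ ^ n) τ := by
  have hqq (τ : ℂ) : qq τ ^ n = cexp (2 * Real.pi * I * n * τ) := by
    rw [qq, ← Complex.exp_nat_mul]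
    ring_nf
  simpa only [hqq, mul_comm] using (hasDerivAt_const_mul (2 * Real.pi * I * n : ℂ)).cexp (x := τ)

variable {a : ℕ → ℂ} {τ : ℂ}

lemma differentiableOn_qSeries_term (a : ℕ → ℂ) (n : ℕ) (U : Set ℂ) :
    DifferentiableOn ℂ (fun τ ↦ a n * qq τ ^ n) U :=
  fun τ _ ↦ ((hasDerivAt_qq_pow n τ).const_mul (a n)).differentiableAt.differentiableWithinAt

lemma norm_qSeries_term_le (a : ℕ → ℂ) (n : ℕ) {c : ℝ} (hτ : c < τ.im) :
    ‖a n * qq τ ^ n‖ ≤ ‖a n‖ * Real.exp (-(2 * Real.pi * c)) ^ n := by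
  rw [norm_mul, norm_pow, norm_qq]
  gcongr

lemma exists_lt_im_summable_qSeries_majorant
    (ha : ∀ r ∈ Set.Ico (0 : ℝ) 1, Summable fun n ↦ ‖a n‖ * r ^ n) (hτ : 0 < τ.im) :
    ∃ c < τ.im, Summable fun n ↦ ‖a n‖ * Real.exp (-(2 * Real.pi * c)) ^ n := by
  obtain ⟨c, hc, hcτ⟩ := exists_between hτ
  have hexp : Real.exp (-(2 * Real.pi * c)) < 1 :=
    Real.exp_lt_one_iff.mpr (neg_lt_zero.mpr (by positivity))
  exact ⟨c, hcτ, ha _ ⟨(Real.exp_pos _).le, hexp⟩⟩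

lemma analyticAt_qSeries (ha : ∀ r ∈ Set.Ico (0 : ℝ) 1, Summable fun n ↦ ‖a n‖ * r ^ n)
    (hτ : 0 < τ.im) : AnalyticAt ℂ (qSeries a) τ := by
  obtain ⟨c, hcτ, hsum⟩ := exists_lt_im_summable_qSeries_majorant ha hτ
  have hopen : IsOpen {z : ℂ | c < z.im} := isOpen_lt continuous_const continuous_im
  exact (differentiableOn_tsum_of_summable_norm hsum (differentiableOn_qSeries_term a · _) hopen
    fun n _ hw ↦ norm_qSeries_term_le a n hw).analyticAt (hopen.mem_nhds hcτ)

lemma hasSum_deriv_qSeries (ha : ∀ r ∈ Set.Ico (0 : ℝ) 1, Summable fun n ↦ ‖a n‖ * r ^ n)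
    (hτ : 0 < τ.im) :
    HasSum (fun n ↦ n * a n * qq τ ^ n) (deriv (qSeries a) τ / (2 * Real.pi * I)) := by
  obtain ⟨c, hcτ, hsum⟩ := exists_lt_im_summable_qSeries_majorant ha hτ
  have hopen : IsOpen {z : ℂ | c < z.im} := isOpen_lt continuous_const continuous_im
  have hderiv := hasSum_deriv_of_summable_norm hsum (differentiableOn_qSeries_term a · _) hopen
    (fun n _ hw ↦ norm_qSeries_term_le a n hw) hcτ
  refine (hderiv.div_const (2 * Real.pi * I)).congr_fun fun n ↦ ?_
  rw [((hasDerivAt_qq_pow n τ).const_mul (a n)).deriv]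
  field [two_pi_I_ne_zero]

open scoped ComplexOrder

lemma qq_pos (hτ : τ.re = 0) : 0 < qq τ := by
  have hreal : 2 * Real.pi * I * τ = ↑(-(2 * Real.pi * τ.im)) := by
    apply Complex.ext <;> simp [hτ]
  rw [qq, hreal, ← ofReal_exp]
  exact_mod_cast Real.exp_pos _

lemma deriv_qSeries_div_pos (ha : ∀ r ∈ Set.Ico (0 : ℝ) 1, Summable fun n ↦ ‖a n‖ * r ^ n)
    (ha0 : ∀ n, 0 ≤ a n) (ha1 : 0 < a 1) (hre : τ.re = 0) (him : 0 < τ.im) :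
    0 < deriv (qSeries a) τ / (2 * Real.pi * I) := by
  have hq : 0 < qq τ := qq_pos hre
  refine hasSum_lt (i := 1) (fun n ↦ ?_) ?_ hasSum_zero (hasSum_deriv_qSeries ha him)
  · have := ha0 n
    positivity
  · simpa using mul_pos ha1 hq

end QSeries

section Eisenstein

open scoped ArithmeticFunction.sigma UpperHalfPlane MatrixGroups

lemma summable_norm_sigma_mul_pow (k : ℕ) :
    ∀ r ∈ Set.Ico (0 : ℝ) 1, Summable fun n ↦ ‖(σ k n : ℂ)‖ * r ^ n := by
  intro r ⟨hr0, hr1⟩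
  have hr : ‖r‖ < 1 := by rwa [Real.norm_of_nonneg hr0]
  refine .of_nonneg_of_le (fun n ↦ by positivity) (fun n ↦ ?_)
    (summable_pow_mul_geometric_of_norm_lt_one (k + 1) hr)
  rw [norm_natCast]
  gcongr
  exact_mod_cast ArithmeticFunction.sigma_le_pow_succ k n

lemma qSeries_sigma (k : ℕ) (τ : ℂ) : qSeries (fun n ↦ σ k n) τ =
    ∑' n : ℕ, (∑ d ∈ (n + 1).divisors, (d : ℂ) ^ k) * qq τ ^ (n + 1) := by
  rw [qSeries, ← tsum_pnat_eq_tsum_of_eq_zero (by simp), tsum_pnat_eq_tsum_succ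
    (f := fun n ↦ (σ k n : ℂ) * qq τ ^ n)]
  simp [ArithmeticFunction.sigma_apply]

lemma eisensteinSeries_eq_qSeries {k : ℕ} (hk : 3 ≤ k) (hk2 : Even k) (z : ℍ) :
    ModularForm.E hk z = 1 - 2 * k / bernoulli k * qSeries (fun n ↦ σ (k - 1) n) z := by
  rw [EisensteinSeries.q_expansion_bernoulli hk hk2, qSeries,
    ← tsum_pnat_eq_tsum_of_eq_zero (by simp)]
  simp [qq]

lemma E4_eq_qSeries : E4 = fun τ ↦ 1 + 240 * qSeries (fun n ↦ σ 3 n) τ := by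
  simp only [qSeries_sigma, funext_iff, E4, implies_true]

lemma E6_eq_qSeries : E6 = fun τ ↦ 1 - 504 * qSeries (fun n ↦ σ 5 n) τ := by
  simp only [qSeries_sigma, funext_iff, E6, implies_true]

lemma E4_coe (z : ℍ) : E4 z = ModularForm.E₄ z := by
  rw [eisensteinSeries_eq_qSeries _ ⟨2, rfl⟩, E4_eq_qSeries,
    show bernoulli 4 = -1 / 30 by decide +kernel]
  norm_num

lemma E6_coe (z : ℍ) : E6 z = ModularForm.E₆ z := by
  rw [eisensteinSeries_eq_qSeries _ ⟨3, rfl⟩, E6_eq_qSeries,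
    show bernoulli 6 = 1 / 42 by decide +kernel]
  norm_num

lemma slashInvariantForm_inversion {F : Type*} [FunLike F ℍ ℂ] {k : ℤ}
    [SlashInvariantFormClass F 𝒮ℒ k] (f : F) (z : ℍ) :
    f (.mk (-z)⁻¹ z.im_inv_neg_coe_pos) = (z : ℂ) ^ k * f z := by
  rw [← UpperHalfPlane.modular_S_smul, ← ModularGroup.denom_S]
  exact SlashInvariantForm.slash_action_eqn'' f (MonoidHom.mem_range.2 ⟨_, rfl⟩) z

lemma E4_inversion {τ : ℂ} (hτ : 0 < τ.im) : E4 (-τ⁻¹) = τ ^ 4 * E4 τ := by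
  lift τ to ℍ using hτ
  have h := slashInvariantForm_inversion ModularForm.E₄ τ
  rw [← E4_coe, ← E4_coe, UpperHalfPlane.coe_mk, inv_neg] at h
  exact_mod_cast h

lemma E6_inversion {τ : ℂ} (hτ : 0 < τ.im) : E6 (-τ⁻¹) = τ ^ 6 * E6 τ := by
  lift τ to ℍ using hτ
  have h := slashInvariantForm_inversion ModularForm.E₆ τ
  rw [← E6_coe, ← E6_coe, UpperHalfPlane.coe_mk, inv_neg] at h
  exact_mod_cast h

lemma E4_cube_sub_E6_sq_ne_zero {τ : ℂ} (hτ : 0 < τ.im) : E4 τ ^ 3 - E6 τ ^ 2 ≠ 0 := by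
  lift τ to ℍ using hτ
  have hΔ := ModularForm.discriminant_eq_E₄_cube_sub_E₆_sq τ
  rw [← E4_coe, ← E6_coe] at hΔ
  intro h
  exact ModularForm.discriminant_ne_zero τ (by rw [hΔ, h, zero_div])

lemma analyticAt_E4 {τ : ℂ} (hτ : 0 < τ.im) : AnalyticAt ℂ E4 τ := by
  rw [E4_eq_qSeries]
  exact analyticAt_const.add
    (analyticAt_const.mul (analyticAt_qSeries (summable_norm_sigma_mul_pow 3) hτ))

lemma analyticAt_E6 {τ : ℂ} (hτ : 0 < τ.im) : AnalyticAt ℂ E6 τ := by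
  rw [E6_eq_qSeries]
  exact analyticAt_const.sub
    (analyticAt_const.mul (analyticAt_qSeries (summable_norm_sigma_mul_pow 5) hτ))

lemma E6_I : E6 I = 0 := by
  have h := E6_inversion (τ := I) (by simp)
  rw [inv_I, neg_neg, show I ^ 6 = -1 by rw [show 6 = 2 * 3 by rfl, pow_mul, I_sq]; norm_num] at h
  linear_combination h / 2

open scoped ComplexOrder in
lemma deriv_E6_ne_zero {τ : ℂ} (hre : τ.re = 0) (him : 0 < τ.im) : deriv E6 τ ≠ 0 := by
  have hS := deriv_qSeries_div_pos (summable_norm_sigma_mul_pow 5) (fun n ↦ by positivity)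
    (by simp) hre him
  have hS' : deriv (qSeries fun n ↦ σ 5 n) τ ≠ 0 := (div_ne_zero_iff.mp hS.ne').1
  rw [E6_eq_qSeries, deriv_const_sub, deriv_const_mul_field]
  simpa using hS'

end Eisenstein

lemma analyticAt_J {τ : ℂ} (hτ : 0 < τ.im) : AnalyticAt ℂ J τ :=
  ((analyticAt_E4 hτ).pow 3).div (((analyticAt_E4 hτ).pow 3).sub ((analyticAt_E6 hτ).pow 2))
    (E4_cube_sub_E6_sq_ne_zero hτ)

lemma J_inversion {τ : ℂ} (hτ : 0 < τ.im) : J (-τ⁻¹) = J τ := by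
  have hτ0 : τ ≠ 0 := fun h ↦ by simp [h] at hτ
  rw [J, J, E4_inversion hτ, E6_inversion hτ, ← mul_div_mul_left (E4 τ ^ 3) _ (pow_ne_zero 12 hτ0)]
  congr 1 <;> ring

lemma iteratedDeriv_two_J_I :
    iteratedDeriv 2 J I = 2 * deriv E6 I ^ 2 * (E4 I ^ 3 - E6 I ^ 2)⁻¹ := by
  have hI : 0 < I.im := by simp
  have hJ : J =ᶠ[𝓝 I] fun τ ↦ 1 + E6 τ ^ 2 * (E4 τ ^ 3 - E6 τ ^ 2)⁻¹ := by
    filter_upwards [UpperHalfPlane.isOpen_upperHalfPlaneSet.mem_nhds hI] with τ hτ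
    have := E4_cube_sub_E6_sq_ne_zero hτ
    rw [J]
    field
  have hΔ : AnalyticAt ℂ (fun τ ↦ (E4 τ ^ 3 - E6 τ ^ 2)⁻¹) I :=
    (((analyticAt_E4 hI).pow 3).sub ((analyticAt_E6 hI).pow 2)).fun_inv
      (E4_cube_sub_E6_sq_ne_zero hI)
  rw [hJ.iteratedDeriv_eq, iteratedDeriv_const_add two_pos,
    iteratedDeriv_two_sq_mul (analyticAt_E6 hI).contDiffAt hΔ.contDiffAt E6_I]

lemma iteratedDeriv_two_J_I_ne_zero : iteratedDeriv 2 J I ≠ 0 := by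
  have hI : 0 < I.im := by simp
  rw [iteratedDeriv_two_J_I]
  exact mul_ne_zero (mul_ne_zero two_ne_zero (pow_ne_zero 2 (deriv_E6_ne_zero I_re hI)))
    (inv_ne_zero (E4_cube_sub_E6_sq_ne_zero hI))

/-- `J` has a critical point at `i`: `J'(i) = 0`, `J''(i) ≠ 0`, and `J'''(i) = 3i·J''(i)`. -/
theorem J_derivatives_at_i :
    deriv J Complex.I = 0 ∧
    iteratedDeriv 2 J Complex.I ≠ 0 ∧
    iteratedDeriv 3 J Complex.I = 3 * Complex.I * iteratedDeriv 2 J Complex.I := by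
  have hI : 0 < I.im := by simp
  have hfix : -I⁻¹ = I := by simp
  have hinv : J ∘ (fun τ ↦ -τ⁻¹) =ᶠ[𝓝 I] J := by
    filter_upwards [UpperHalfPlane.isOpen_upperHalfPlaneSet.mem_nhds hI] with τ hτ
    exact J_inversion hτ
  have hJ := analyticAt_J hI
  refine ⟨deriv_eq_zero_of_comp_eventuallyEq hJ.differentiableAt hasDerivAt_neg_inv_I hfix hinv,
    iteratedDeriv_two_J_I_ne_zero, ?_⟩
  have h := two_smul_iteratedDeriv_three_of_comp_eventuallyEq hJ.contDiffAt
    (contDiffAt_inv ℂ I_ne_zero).neg hasDerivAt_neg_inv_I.deriv hfix hinv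
  rw [iteratedDeriv_two_neg_inv_I, smul_eq_mul, smul_eq_mul] at h
  linear_combination h / 2
end
end

section
/- Let ρ = e^{2πi/3} = (−1 + i√3)/2 ∈ ℍ. The Dedekind eta function satisfies η'(ρ)/η(ρ) = (1/2)·(1+ρ)/(1−ρ); equivalently, 24 η'(ρ)/η(ρ) = 12 (1+ρ)/(1−ρ). -/
open Complex Filter Topology

noncomputable section

/-!
Since `η'/η = (πi/12) E₂`, the quasi-modularity of `E₂` amounts to
`(η'/η)(γz) = j² (η'/η)(z) + c j / 2`, where `γ ∈ SL₂(ℤ)` has lower row `(c, d)` and `j = cz + d`.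
At a point fixed by `γ` this is a linear equation for `(η'/η)(z)`. The point `ρ` is fixed by `ST`,
for which `j = ρ + 1` and `j² = ρ`, so that the equation becomes `(1 - ρ) (η'/η)(ρ) = (1 + ρ) / 2`.
-/

section LogDerivEta

open UpperHalfPlane ModularGroup EisensteinSeries
open scoped MatrixGroups ModularForm

lemma E2_smul (γ : SL(2, ℤ)) (z : ℍ) :
    E2 (γ • z) = denom γ z ^ 2 * E2 z + 6 * γ 1 0 * denom γ z / (Real.pi * Complex.I) := by
  have hj : denom γ z ≠ 0 := denom_ne_zero γ z
  have hpi : (Real.pi : ℂ) ≠ 0 := mod_cast Real.pi_ne_zero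
  have hslash := congrFun (E2_slash_action γ) z
  simp only [ModularForm.SL_slash_apply, Pi.sub_apply, Pi.smul_apply, smul_eq_mul, D2,
    riemannZeta_two, zpow_neg, zpow_ofNat] at hslash
  field_simp at hslash ⊢
  linear_combination Complex.I * hslash - 6 * γ 1 0 * denom γ z * Complex.I_sq

lemma logDeriv_eta_smul (γ : SL(2, ℤ)) (z : ℍ) :
    logDeriv η ↑(γ • z) = denom γ z ^ 2 * logDeriv η z + γ 1 0 * denom γ z / 2 := by
  have hpi : (Real.pi : ℂ) ≠ 0 := mod_cast Real.pi_ne_zero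
  rw [ModularForm.logDeriv_eta_eq_E2, ModularForm.logDeriv_eta_eq_E2, E2_smul]
  field_simp
  ring

lemma logDeriv_eta_of_smul_eq_self {γ : SL(2, ℤ)} {z : ℍ} (hz : γ • z = z) :
    (1 - denom γ z ^ 2) * logDeriv η z = γ 1 0 * denom γ z / 2 := by
  have h := logDeriv_eta_smul γ z
  rw [hz] at h
  linear_combination h

lemma S_mul_T_smul_ρ : (S * T) • ρ = ρ := by
  ext
  rw [mul_smul, modular_S_smul, modular_T_smul]
  simp only [coe_vadd, ofReal_one]
  exact inv_eq_of_mul_eq_one_left (by linear_combination -ρ_sq)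

lemma coe_S_mul_T : ((S * T : SL(2, ℤ)) : Matrix (Fin 2) (Fin 2) ℤ) = !![0, -1; 1, 1] := by
  decide

lemma denom_S_mul_T (z : ℍ) : denom (S * T : SL(2, ℤ)) z = z + 1 := by
  rw [denom_apply, coe_S_mul_T]
  simp

lemma logDeriv_eta_ρ : logDeriv η ρ = 1 / 2 * ((1 + ρ) / (1 - ρ)) := by
  have hρ : 1 - (ρ : ℂ) ≠ 0 := sub_ne_zero.mpr (mod_cast (ρ.ne_natCast 1).symm)
  have hsq : (ρ + 1 : ℂ) ^ 2 = ρ := by linear_combination ρ_sq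
  have hfixed := logDeriv_eta_of_smul_eq_self S_mul_T_smul_ρ
  simp only [denom_S_mul_T, hsq, coe_S_mul_T, Matrix.of_apply, Matrix.cons_val, Int.cast_one,
    one_mul] at hfixed
  field_simp
  linear_combination 2 * hfixed

end LogDerivEta

lemma dedekindEta_eq_eta : dedekindEta = ModularForm.eta := by
  ext τ
  simp only [dedekindEta, ModularForm.eta, ModularForm.eta_q_eq_pow, qq, Function.Periodic.qParam]
  congr 2
  push_cast
  ring

lemma rho_eq_coe_ρ : rho = UpperHalfPlane.ρ := by
  have hangle : (2 * Real.pi * I / 3 : ℂ) = ↑(Real.pi - Real.pi / 3) * I := by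
    push_cast
    ring
  rw [rho, hangle]
  apply Complex.ext
  · rw [exp_ofReal_mul_I_re, Real.cos_pi_sub, Real.cos_pi_div_three, UpperHalfPlane.ρ]
    norm_num
  · rw [exp_ofReal_mul_I_im, Real.sin_pi_sub, Real.sin_pi_div_three, UpperHalfPlane.ρ]

/-- `η'(ρ)/η(ρ) = (1/2)·(1+ρ)/(1−ρ)`, equivalently `24 η'(ρ)/η(ρ) = 12(1+ρ)/(1−ρ)`. -/
theorem eta_log_deriv_at_rho :
    deriv dedekindEta rho / dedekindEta rho = 1 / 2 * ((1 + rho) / (1 - rho)) ∧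
    24 * (deriv dedekindEta rho / dedekindEta rho) = 12 * ((1 + rho) / (1 - rho)) := by
  have h : deriv dedekindEta rho / dedekindEta rho = 1 / 2 * ((1 + rho) / (1 - rho)) := by
    rw [← logDeriv_apply, dedekindEta_eq_eta, rho_eq_coe_ρ, logDeriv_eta_ρ]
  exact ⟨h, by linear_combination 24 * h⟩
end
end
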